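/- Let (A, t) be a C_k-algebra and N ⊆ A. Then N is a maximal c-filter of A if and only if there exists an ultrafilter U of A such that N = ⋂_{i=0}^{k-1} (t^i(U) ∩ φ(t^i(U))). -/

import Mathlib

universe u

/-- Modal pseudocomplemented De Morgan algebra (mpM-algebra). -/
class MpM (A : Type u) extends DistribLattice A, BoundedOrder A where
  dm : A → A   -- De Morgan negation ∼
  ps : A → A   -- pseudocomplement *
  dm_dm : ∀ x : A, dm (dm x) = x
  dm_sup : ∀ x y : A, dm (x ⊔ y) = dm x ⊓ dm y
  pseudo : ∀ a x : A, a ⊓ x = ⊥ ↔ x ≤ ps a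
  modal : ∀ x : A, x ⊔ dm x ≤ x ⊔ ps x

open MpM

variable {A : Type u} [MpM A]

/-- ∇x = ∼(∼x ∧ x*) -/
def nabla (x : A) : A := dm (dm x ⊓ ps x)

/-- △x = ∼∇∼x -/
def tri (x : A) : A := dm (nabla (dm x))

/-- A C_k-algebra structure on an mpM-algebra `A`: an automorphism `t` with `t^k = id`. -/
structure CkStr (A : Type u) [MpM A] (k : ℕ) where
  t : A → A
  bij : Function.Bijective t
  map_inf : ∀ x y : A, t (x ⊓ y) = t x ⊓ t y
  map_sup : ∀ x y : A, t (x ⊔ y) = t x ⊔ t y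
  map_dm : ∀ x : A, t (dm x) = dm (t x)
  map_ps : ∀ x : A, t (ps x) = ps (t x)
  map_bot : t (⊥ : A) = ⊥
  map_top : t (⊤ : A) = ⊤
  periodic : ∀ x : A, t^[k] x = x

/-- Lattice filter: nonempty, upward closed, closed under binary meets. -/
def IsLatFilter (F : Set A) : Prop :=
  F.Nonempty ∧ (∀ x ∈ F, ∀ y : A, x ≤ y → y ∈ F) ∧ ∀ x ∈ F, ∀ y ∈ F, x ⊓ y ∈ F

/-- c-filter: a filter closed under △ and t. -/
def IsCFilter {k : ℕ} (T : CkStr A k) (F : Set A) : Prop :=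
  IsLatFilter F ∧ ∀ x ∈ F, tri x ∈ F ∧ T.t x ∈ F

/-- maximal c-filter: proper and not properly contained in a proper c-filter. -/
def IsMaxCFilter {k : ℕ} (T : CkStr A k) (N : Set A) : Prop :=
  IsCFilter T N ∧ N ≠ Set.univ ∧
    ∀ G : Set A, IsCFilter T G → G ≠ Set.univ → N ⊆ G → N = G

/-- prime filter -/
def IsPrimeFilter (P : Set A) : Prop :=
  IsLatFilter P ∧ P ≠ Set.univ ∧ ∀ x y : A, x ⊔ y ∈ P → x ∈ P ∨ y ∈ P

/-- ultrafilter: maximal proper (lattice) filter -/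
def IsUltraFilter (U : Set A) : Prop :=
  IsLatFilter U ∧ U ≠ Set.univ ∧
    ∀ G : Set A, IsLatFilter G → G ≠ Set.univ → U ⊆ G → U = G

/-- Birula–Rasiowa transformation φ(P) = A \ {∼x : x ∈ P}. -/
def brPhi (P : Set A) : Set A := Set.univ \ (dm '' P)

/-- a ⇁ b = (⋁_{i=1}^{k} ∇(∼ t^i(a))) ∨ b -/
def rimp {k : ℕ} (T : CkStr A k) (a b : A) : A :=
  ((Finset.Icc 1 k).sup fun i => nabla (dm (T.t^[i] a))) ⊔ b

/-- cyclic deductive system -/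
def IsCDS {k : ℕ} (T : CkStr A k) (D : Set A) : Prop :=
  (⊤ : A) ∈ D ∧ ∀ x ∈ D, ∀ y : A, rimp T x y ∈ D → y ∈ D

/-- maximal cyclic deductive system -/
def IsMaxCDS {k : ℕ} (T : CkStr A k) (M : Set A) : Prop :=
  IsCDS T M ∧ M ≠ Set.univ ∧
    ∀ G : Set A, IsCDS T G → G ≠ Set.univ → M ⊆ G → M = G

/-- the smallest cyclic deductive system containing `X` -/
def genCDS {k : ℕ} (T : CkStr A k) (X : Set A) : Set A :=
  ⋂₀ {D : Set A | IsCDS T D ∧ X ⊆ D}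

/-- K(A) = {x : t(x) = x and ∇x = x} -/
def Kset {k : ℕ} (T : CkStr A k) : Set A := {x : A | T.t x = x ∧ nabla x = x}

/-- consistency operator ∘x = ⋀_{i=0}^{k} t^i((∼x ∨ x) ∧ (x ∧ ∼x)*) -/
def cCirc {k : ℕ} (T : CkStr A k) (x : A) : A :=
  (Finset.Icc 0 k).inf fun i => T.t^[i] ((dm x ⊔ x) ⊓ ps (x ⊓ dm x))

/-- x → y = ∼((∼(x∨y))* ∧ (x∨y)) ∨ ((∼(x∧y))* ∧ (x∧y)) -/
def mpTo (x y : A) : A :=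
  dm (ps (dm (x ⊔ y)) ⊓ (x ⊔ y)) ⊔ (ps (dm (x ⊓ y)) ⊓ (x ⊓ y))

/-- x ⇒ y = (x → y) ∧ (∼y → ∼x) -/
def mpIff (x y : A) : A := mpTo x y ⊓ mpTo (dm y) (dm x)

section Aux

theorem dm_anti {x y : A} (h : x ≤ y) : dm y ≤ dm x := by
  have := dm_sup x y
  rw [sup_eq_right.2 h] at this
  rw [this]; exact inf_le_left

theorem dm_inf' (x y : A) : dm (x ⊓ y) = dm x ⊔ dm y := by
  rw [← dm_dm (dm x ⊔ dm y), dm_sup, dm_dm, dm_dm]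

theorem inf_ps (x : A) : x ⊓ ps x = ⊥ := (pseudo x (ps x)).2 le_rfl

theorem ps_anti {x y : A} (h : x ≤ y) : ps y ≤ ps x := by
  rw [← pseudo, eq_bot_iff, ← inf_ps y]
  exact inf_le_inf_right _ h

theorem tri_eq (x : A) : tri x = x ⊓ ps (dm x) := by
  simp [tri, nabla, dm_dm]

theorem tri_le (x : A) : tri x ≤ x := by rw [tri_eq]; exact inf_le_left

theorem tri_mono {x y : A} (h : x ≤ y) : tri x ≤ tri y := by
  rw [tri_eq, tri_eq]; exact inf_le_inf h (ps_anti (dm_anti h))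

theorem ps_sup' (x y : A) : ps x ⊓ ps y ≤ ps (x ⊔ y) := by
  rw [← pseudo, inf_sup_right, eq_bot_iff]
  apply sup_le
  · rw [← inf_assoc, inf_ps]; simp
  · rw [inf_left_comm, inf_ps]; simp

theorem tri_inf (x y : A) : tri x ⊓ tri y ≤ tri (x ⊓ y) := by
  rw [tri_eq, tri_eq, tri_eq, dm_inf', inf_inf_inf_comm]
  exact inf_le_inf_left _ (ps_sup' _ _)

theorem tri_tri (x : A) : tri (tri x) = tri x := by
  apply le_antisymm (tri_le _)
  conv_rhs => rw [tri_eq]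
  apply le_inf le_rfl
  rw [tri_eq, dm_inf']
  refine le_trans (le_inf inf_le_right ?_) (ps_sup' _ _)
  rw [← pseudo, eq_bot_iff, ← inf_ps (dm x)]
  refine le_inf ?_ (inf_le_right.trans inf_le_right)
  have h := dm_anti (modal (dm x))
  rw [dm_sup, dm_sup, dm_dm] at h
  refine le_trans (le_inf (inf_le_right.trans inf_le_left) inf_le_left) (h.trans inf_le_right)

variable {k : ℕ} (T : CkStr A k)

theorem t_tri (x : A) : T.t (tri x) = tri (T.t x) := by
  rw [tri_eq, tri_eq, T.map_inf, T.map_ps, T.map_dm]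

theorem it_tri (j : ℕ) (x : A) : T.t^[j] (tri x) = tri (T.t^[j] x) := by
  induction j with
  | zero => rfl
  | succ n ih => rw [Function.iterate_succ_apply', Function.iterate_succ_apply', ih, t_tri]

theorem it_dm (j : ℕ) (x : A) : T.t^[j] (dm x) = dm (T.t^[j] x) := by
  induction j with
  | zero => rfl
  | succ n ih => rw [Function.iterate_succ_apply', Function.iterate_succ_apply', ih, T.map_dm]

theorem it_ps (j : ℕ) (x : A) : T.t^[j] (ps x) = ps (T.t^[j] x) := by
  induction j with
  | zero => rfl
  | succ n ih => rw [Function.iterate_succ_apply', Function.iterate_succ_apply', ih, T.map_ps]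

theorem it_inf (j : ℕ) (x y : A) : T.t^[j] (x ⊓ y) = T.t^[j] x ⊓ T.t^[j] y := by
  induction j with
  | zero => rfl
  | succ n ih => simp only [Function.iterate_succ_apply', ih, T.map_inf]

theorem it_mono (j : ℕ) {x y : A} (h : x ≤ y) : T.t^[j] x ≤ T.t^[j] y := by
  rw [← inf_eq_left, ← it_inf, inf_eq_left.2 h]

theorem it_bot (j : ℕ) : T.t^[j] (⊥ : A) = ⊥ := Function.iterate_fixed T.map_bot j

theorem it_mul (m : ℕ) (x : A) : T.t^[k * m] x = x := by
  rw [Function.iterate_mul]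
  exact Function.iterate_fixed (T.periodic x) m

theorem it_mod (m : ℕ) (x : A) : T.t^[m % k] x = T.t^[m] x := by
  conv_rhs => rw [← Nat.mod_add_div m k, Function.iterate_add_apply, it_mul]

theorem proper_iff {F : Set A} (hF : IsLatFilter F) : F ≠ Set.univ ↔ (⊥ : A) ∉ F := by
  constructor
  · intro h hb
    exact h (Set.eq_univ_of_forall fun x => hF.2.1 _ hb _ bot_le)
  · intro h e
    exact h (e ▸ Set.mem_univ _)

theorem ultra_ps {U : Set A} (hU : IsUltraFilter U) (x : A) : ps x ∈ U ↔ x ∉ U := by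
  have hb := (proper_iff hU.1).1 hU.2.1
  constructor
  · intro h hx
    have := hU.1.2.2 _ hx _ h
    rw [inf_ps] at this
    exact hb this
  · intro hx
    by_contra hps
    have hG : IsLatFilter {z | ∃ u ∈ U, u ⊓ x ≤ z} := by
      refine ⟨?_, ?_, ?_⟩
      · obtain ⟨u, hu⟩ := hU.1.1
        exact ⟨u, u, hu, inf_le_left⟩
      · rintro a ⟨u, hu, h⟩ b hab
        exact ⟨u, hu, h.trans hab⟩
      · rintro a ⟨u, hu, h⟩ b ⟨v, hv, h'⟩
        refine ⟨u ⊓ v, hU.1.2.2 _ hu _ hv, le_inf ?_ ?_⟩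
        · exact (inf_le_inf_right _ inf_le_left).trans h
        · exact (inf_le_inf_right _ inf_le_right).trans h'
    have := hU.2.2 _ hG ((proper_iff hG).2 ?_) (fun u hu => ⟨u, hu, inf_le_left⟩)
    · apply hx
      rw [this]
      obtain ⟨u, hu⟩ := hU.1.1
      exact ⟨u, hu, inf_le_right⟩
    · rintro ⟨u, hu, h⟩
      apply hps
      refine hU.1.2.1 _ hu _ ((pseudo x u).1 ?_)
      rw [inf_comm]; exact le_bot_iff.1 h

theorem ultra_tri {U : Set A} (hU : IsUltraFilter U) (x : A) :
    tri x ∈ U ↔ x ∈ U ∧ dm x ∉ U := by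
  rw [tri_eq, ← ultra_ps hU]
  exact ⟨fun h => ⟨hU.1.2.1 _ h _ inf_le_left, hU.1.2.1 _ h _ inf_le_right⟩,
    fun h => hU.1.2.2 _ h.1 _ h.2⟩

theorem exists_ultra {F : Set A} (hF : IsLatFilter F) (hp : F ≠ Set.univ) :
    ∃ U, IsUltraFilter U ∧ F ⊆ U := by
  have hz : ∀ c ⊆ {G : Set A | IsLatFilter G ∧ (⊥ : A) ∉ G}, IsChain (· ⊆ ·) c → c.Nonempty →
      ∃ ub ∈ {G : Set A | IsLatFilter G ∧ (⊥ : A) ∉ G}, ∀ s ∈ c, s ⊆ ub := by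
    intro c hc hch hne
    refine ⟨⋃₀ c, ⟨⟨?_, ?_, ?_⟩, ?_⟩, fun s hs => Set.subset_sUnion_of_mem hs⟩
    · obtain ⟨s, hs⟩ := hne
      obtain ⟨x, hx⟩ := (hc hs).1.1
      exact ⟨x, s, hs, hx⟩
    · rintro x ⟨s, hs, hx⟩ y hxy
      exact ⟨s, hs, (hc hs).1.2.1 _ hx _ hxy⟩
    · rintro x ⟨s, hs, hx⟩ y ⟨r, hr, hy⟩
      rcases hch.total hs hr with h | h
      · exact ⟨r, hr, (hc hr).1.2.2 _ (h hx) _ hy⟩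
      · exact ⟨s, hs, (hc hs).1.2.2 _ hx _ (h hy)⟩
    · rintro ⟨s, hs, hx⟩
      exact (hc hs).2 hx
  obtain ⟨U, hFU, hU⟩ := zorn_subset_nonempty {G : Set A | IsLatFilter G ∧ (⊥ : A) ∉ G} hz F
    ⟨hF, (proper_iff hF).1 hp⟩
  refine ⟨U, ⟨hU.prop.1, (proper_iff hU.prop.1).2 hU.prop.2, ?_⟩, hFU⟩
  intro G hG hGp hUG
  exact hU.eq_of_subset ⟨hG, (proper_iff hG).1 hGp⟩ hUG

/-- The c-filter attached to an ultrafilter. -/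
def NU (U : Set A) : Set A := {x | ∀ j, tri (T.t^[j] x) ∈ U}

theorem mem_image_it {i : ℕ} (hi : i ≤ k) (U : Set A) (y : A) :
    y ∈ T.t^[i] '' U ↔ T.t^[k - i] y ∈ U := by
  constructor
  · rintro ⟨u, hu, rfl⟩
    rw [← Function.iterate_add_apply, Nat.sub_add_cancel hi, T.periodic]
    exact hu
  · intro h
    refine ⟨_, h, ?_⟩
    rw [← Function.iterate_add_apply, Nat.add_sub_cancel' hi, T.periodic]

theorem NU_eq (hk : 0 < k) {U : Set A} (hU : IsUltraFilter U) :
    (⋂ i ∈ Finset.range k, (T.t^[i] '' U ∩ brPhi (T.t^[i] '' U))) = NU T U := by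
  have key : ∀ x, ∀ i < k, (x ∈ T.t^[i] '' U ∩ brPhi (T.t^[i] '' U) ↔
      tri (T.t^[k - i] x) ∈ U) := by
    intro x i hi
    rw [ultra_tri hU, ← it_dm, ← mem_image_it T hi.le, ← mem_image_it T hi.le]
    have : x ∈ brPhi (T.t^[i] '' U) ↔ dm x ∉ T.t^[i] '' U := by
      simp only [brPhi, Set.mem_sdiff, Set.mem_univ, true_and, not_iff_not]
      constructor
      · rintro ⟨y, hy, rfl⟩
        rwa [dm_dm]
      · intro h
        exact ⟨_, h, dm_dm x⟩
    rw [Set.mem_inter_iff, this]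
  ext x
  rw [Set.mem_iInter₂]
  constructor
  · intro h j
    rw [← it_mod]
    have hlt := Nat.mod_lt j hk
    rcases Nat.eq_zero_or_pos (j % k) with h0 | h0
    · have := (key x 0 hk).1 (h 0 (Finset.mem_range.2 hk))
      rw [Nat.sub_zero, T.periodic] at this
      rw [h0]; exact this
    · have hl : k - j % k < k := by omega
      have := (key x _ hl).1 (h _ (Finset.mem_range.2 hl))
      rwa [show k - (k - j % k) = j % k by omega] at this
  · intro h i hi
    exact (key x i (Finset.mem_range.1 hi)).2 (h _)

theorem NU_cfilter {U : Set A} (hU : IsUltraFilter U) : IsCFilter T (NU T U) := by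
  refine ⟨⟨⟨⊤, ?_⟩, ?_, ?_⟩, ?_⟩
  · intro j
    rw [Function.iterate_fixed T.map_top, tri_eq]
    obtain ⟨u, hu⟩ := hU.1.1
    refine hU.1.2.1 _ hu _ (le_inf le_top ?_)
    have hd : dm (⊤ : A) = ⊥ := by
      rw [eq_bot_iff, ← dm_dm (⊥ : A)]; exact dm_anti le_top
    rw [← pseudo, hd]; simp
  · intro x hx y hxy j
    exact hU.1.2.1 _ (hx j) _ (tri_mono (it_mono T j hxy))
  · intro x hx y hy j
    rw [it_inf]
    exact hU.1.2.1 _ (hU.1.2.2 _ (hx j) _ (hy j)) _ (tri_inf _ _)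
  · intro x hx
    constructor
    · intro j
      rw [it_tri, tri_tri]; exact hx j
    · intro j
      rw [← Function.iterate_succ_apply]; exact hx _

theorem NU_proper {U : Set A} (hU : IsUltraFilter U) : NU T U ≠ Set.univ := by
  rw [proper_iff (NU_cfilter T hU).1]
  intro h
  exact (proper_iff hU.1).1 hU.2.1 (hU.1.2.1 _ (h 0) _ (tri_le _))

theorem cf_it {G : Set A} (hG : IsCFilter T G) {x : A} (hx : x ∈ G) (j : ℕ) :
    T.t^[j] x ∈ G := by
  induction j with
  | zero => exact hx
  | succ n ih => rw [Function.iterate_succ_apply']; exact (hG.2 _ ih).2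

theorem exists_inv {G : Set A} (hG : IsCFilter T G) {x : A} (hx : x ∈ G) (n : ℕ) :
    ∃ a ∈ G, tri a = a ∧ ∀ m < n, a ≤ T.t^[m] (tri x) := by
  induction n with
  | zero => exact ⟨tri x, (hG.2 x hx).1, tri_tri x, fun m hm => absurd hm (Nat.not_lt_zero m)⟩
  | succ n ih =>
    obtain ⟨a, ha, hta, h⟩ := ih
    refine ⟨a ⊓ T.t^[n] (tri x), hG.1.2.2 _ ha _ (cf_it T hG (hG.2 x hx).1 n), ?_, ?_⟩
    · apply le_antisymm (tri_le _)
      conv_lhs => rw [← hta, ← tri_tri x, it_tri]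
      exact tri_inf _ _
    · intro m hm
      rcases Nat.lt_succ_iff_lt_or_eq.1 hm with h' | rfl
      · exact inf_le_left.trans (h m h')
      · exact inf_le_right

theorem NU_max (hk : 0 < k) {U : Set A} (hU : IsUltraFilter U) : IsMaxCFilter T (NU T U) := by
  refine ⟨NU_cfilter T hU, NU_proper T hU, ?_⟩
  intro G hG hGp hNG
  refine Set.Subset.antisymm hNG fun x hx => ?_
  by_contra hxN
  obtain ⟨m, hm⟩ : ∃ m, tri (T.t^[m] x) ∉ U := by
    simpa [NU] using hxN
  obtain ⟨a, ha, hta, h⟩ := exists_inv T hG hx k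
  have hle : ∀ j, T.t^[j] a ≤ tri (T.t^[m] x) := by
    intro j
    obtain ⟨q, rfl⟩ : ∃ q, k = q + 1 := ⟨k - 1, by omega⟩
    have h1 := it_mono T j (h _ (Nat.mod_lt (m + j * q) hk))
    rw [it_mod, ← Function.iterate_add_apply,
      show j + (m + j * q) = m + (q + 1) * j by ring, Function.iterate_add_apply,
      it_mul, it_tri] at h1
    exact h1
  have hn : ∀ j, T.t^[j] a ∉ U := fun j hj => hm (hU.1.2.1 _ hj _ (hle j))
  have hda : dm (ps a) ≤ a := by
    rw [← dm_dm a]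
    apply dm_anti
    rw [dm_dm, ← pseudo, eq_bot_iff, ← inf_ps (dm a), inf_comm]
    refine inf_le_inf_left _ ?_
    rw [← hta, tri_eq, ← tri_eq, hta]
    conv_lhs => rw [← hta, tri_eq]
    exact inf_le_right
  have hps : ps a ∈ NU T U := by
    intro j
    rw [ultra_tri hU, it_ps, ultra_ps hU, ← it_ps, ← it_dm]
    exact ⟨hn j, fun hh => hn j (hU.1.2.1 _ hh _ (it_mono T j hda))⟩
  have := hG.1.2.2 _ ha _ (hNG hps)
  rw [inf_ps] at this
  exact (proper_iff hG.1).1 hGp this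

end Aux

theorem stmt2 {k : ℕ} (hk : 0 < k) (T : CkStr A k) (N : Set A) :
    IsMaxCFilter T N ↔
      ∃ U : Set A, IsUltraFilter U ∧
        N = ⋂ i ∈ Finset.range k, (T.t^[i] '' U ∩ brPhi (T.t^[i] '' U)) := by
  constructor
  · intro hN
    obtain ⟨U, hU, hNU⟩ := exists_ultra hN.1.1 hN.2.1
    refine ⟨U, hU, ?_⟩
    rw [NU_eq T hk hU]
    exact hN.2.2 _ (NU_cfilter T hU) (NU_proper T hU)
      fun x hx j => hNU (hN.1.2 _ (cf_it T hN.1 hx j)).1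
  · rintro ⟨U, hU, rfl⟩
    rw [NU_eq T hk hU]
    exact NU_max T hk hU
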